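/- There exists an F₄-linear code C ⊆ F₄^{42} of F₄-dimension 26 whose minimum Hamming distance is 9 and which contains its Hermitian dual: C^{⊥h} ⊆ C (hence C^{⊥h} is a Hermitian self-orthogonal [42,16] code). -/

import Mathlib

open Polynomial

set_option synthInstance.maxHeartbeats 1000000
set_option maxHeartbeats 1000000

noncomputable section

/-- The field `F₄ = GF(4)`. -/
abbrev F4 : Type := GaloisField 2 2

/-- The coefficient vector `[p]ₙ ∈ F₄ⁿ` of the remainder of `p` modulo `Xⁿ - 1`
(coefficient of `X^i` in position `i`). -/
def coeffVec (n : ℕ) (p : Polynomial F4) : Fin n → F4 :=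
  fun i => (p % (X ^ n - 1)).coeff i

/-- The Hermitian inner product `⟨u,v⟩_h = ∑ i, u i * (v i)²` on `F₄^m`. -/
def hermInner {m : ℕ} (u v : Fin m → F4) : F4 := ∑ i, u i * (v i) ^ 2

/-- The Hermitian inner product on `F₄ⁿ × F₄ⁿ`: the sum of the Hermitian inner
products of the two components. -/
def hermInner2 {n : ℕ} (u v : (Fin n → F4) × (Fin n → F4)) : F4 :=
  hermInner u.1 v.1 + hermInner u.2 v.2

/-- The conjugate transform `f̄ := f₀² + ∑_{i=1}^{n-1} f_i² X^{n-i}`, where `f` is first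
reduced modulo `Xⁿ - 1`. -/
def conjT (n : ℕ) (f : Polynomial F4) : Polynomial F4 :=
  C (((f % (X ^ n - 1)).coeff 0) ^ 2) +
    ∑ i ∈ Finset.Ico 1 n, C (((f % (X ^ n - 1)).coeff i) ^ 2) * X ^ (n - i)

/-- The Hermitian dual generator `g^{⊥h}(X) := ∑_{j=0}^{deg h} (h_j)² X^{deg h - j}`,
the conjugate reciprocal of the check polynomial `h = (Xⁿ-1)/g`. -/
def dualGen (n : ℕ) (g : Polynomial F4) : Polynomial F4 :=
  ∑ j ∈ Finset.range (((X ^ n - 1) / g).natDegree + 1),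
    C ((((X ^ n - 1) / g).coeff j) ^ 2) * X ^ (((X ^ n - 1) / g).natDegree - j)

lemma hermInner_add_right {m : ℕ} (u v w : Fin m → F4) :
    hermInner u (v + w) = hermInner u v + hermInner u w := by
  simp only [hermInner, Pi.add_apply]
  rw [← Finset.sum_add_distrib]
  refine Finset.sum_congr rfl fun i _ => ?_
  rw [add_pow_char (v i) (w i) 2, mul_add]

lemma hermInner_smul_right {m : ℕ} (c : F4) (u v : Fin m → F4) :
    hermInner u (c • v) = c ^ 2 * hermInner u v := by
  simp only [hermInner, Pi.smul_apply, smul_eq_mul, mul_pow, Finset.mul_sum]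
  exact Finset.sum_congr rfl fun i _ => by ring

/-- The Hermitian dual code `C^{⊥h} = {v | ∀ u ∈ C, ⟨u,v⟩_h = 0}` of a linear code in `F₄^m`. -/
def hermDual {m : ℕ} (Ccode : Submodule F4 (Fin m → F4)) : Submodule F4 (Fin m → F4) where
  carrier := {v | ∀ u ∈ Ccode, hermInner u v = 0}
  zero_mem' := by intro u _; simp [hermInner]
  add_mem' := by
    intro v w hv hw u hu
    rw [hermInner_add_right, hv u hu, hw u hu, add_zero]
  smul_mem' := by
    intro c v hv u hu
    rw [hermInner_smul_right, hv u hu, mul_zero]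

lemma hermInner2_add_right {n : ℕ} (u v w : (Fin n → F4) × (Fin n → F4)) :
    hermInner2 u (v + w) = hermInner2 u v + hermInner2 u w := by
  simp only [hermInner2, Prod.fst_add, Prod.snd_add, hermInner_add_right]
  ring

lemma hermInner2_smul_right {n : ℕ} (c : F4) (u v : (Fin n → F4) × (Fin n → F4)) :
    hermInner2 u (c • v) = c ^ 2 * hermInner2 u v := by
  simp only [hermInner2, Prod.smul_fst, Prod.smul_snd, hermInner_smul_right]
  ring

/-- The Hermitian dual code of a linear code in `F₄ⁿ × F₄ⁿ` (identified with `F₄^{2n}`). -/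
def hermDualPair {n : ℕ} (Ccode : Submodule F4 ((Fin n → F4) × (Fin n → F4))) :
    Submodule F4 ((Fin n → F4) × (Fin n → F4)) where
  carrier := {v | ∀ u ∈ Ccode, hermInner2 u v = 0}
  zero_mem' := by intro u _; simp [hermInner2, hermInner]
  add_mem' := by
    intro v w hv hw u hu
    rw [hermInner2_add_right, hv u hu, hw u hu, add_zero]
  smul_mem' := by
    intro c v hv u hu
    rw [hermInner2_smul_right, hv u hu, mul_zero]

/-- Hamming weight of a vector. -/
def hammingWt {m : ℕ} (u : Fin m → F4) : ℕ := Nat.card {i : Fin m // u i ≠ 0}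

/-- The 2-generator quasi-cyclic code `C(g₁,g₂,ν)` of length `2n` and index 2:
the `F₄`-span of all `([a·ν·g₁]ₙ, [a·g₁]ₙ)` and `([b·g₂]ₙ, [b·ν·g₂]ₙ)`. -/
def Cqc (n : ℕ) (g₁ g₂ ν : Polynomial F4) : Submodule F4 ((Fin n → F4) × (Fin n → F4)) :=
  Submodule.span F4
    ({x | ∃ a : Polynomial F4, x = (coeffVec n (a * ν * g₁), coeffVec n (a * g₁))} ∪
     {x | ∃ b : Polynomial F4, x = (coeffVec n (b * g₂), coeffVec n (b * ν * g₂))})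

/-- The quasi-cyclic code `D`: the `F₄`-span of all `([-ν̄·c·g₁^{⊥h}]ₙ, [c·g₁^{⊥h}]ₙ)`
and `([s·g₂^{⊥h}]ₙ, [-ν̄·s·g₂^{⊥h}]ₙ)`. -/
def Dqc (n : ℕ) (g₁ g₂ ν : Polynomial F4) : Submodule F4 ((Fin n → F4) × (Fin n → F4)) :=
  Submodule.span F4
    ({x | ∃ c : Polynomial F4,
        x = (coeffVec n (-(conjT n ν) * c * dualGen n g₁), coeffVec n (c * dualGen n g₁))} ∪
     {x | ∃ s : Polynomial F4,
        x = (coeffVec n (s * dualGen n g₂), coeffVec n (-(conjT n ν) * s * dualGen n g₂))})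

/-- The quotient ring `R = F₄[X]/(Xⁿ - 1)`. -/
abbrev Rng (n : ℕ) : Type := Polynomial F4 ⧸ Ideal.span ({X ^ n - 1} : Set (Polynomial F4))

/-- The natural projection `F₄[X] → R`. -/
def toRng (n : ℕ) : Polynomial F4 →+* Rng n := Ideal.Quotient.mk _

/-- The `R`-linear map `R → R × R`, `a ↦ (a·û, a·v̂)`, where `û, v̂` are the images of
`u, v` in `R`. -/
def qcMap (n : ℕ) (u v : Polynomial F4) : Rng n →ₗ[Rng n] Rng n × Rng n :=
  (LinearMap.toSpanSingleton (Rng n) (Rng n) (toRng n u)).prod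
    (LinearMap.toSpanSingleton (Rng n) (Rng n) (toRng n v))

namespace QC42

def gA : ℕ := 444763930625
def gB : ℕ := 1797006426112
def AA : ℕ := 93172094526574927157786321156774306875262978495366126473446764031991100898176065958178306667288971410284767350122182909332991
def AB : ℕ := 119188199872628763412005302503069310305377695582636997606143619254624813762727382198559353437015423648696920463674650581427694
def uA : ℕ := 1653897978368
def uB : ℕ := 1653562429952
def rows : List ℕ := [7903317842793794327478273, 8574051545382789223153664, 13623060866630111157256192,
   4287030384377413037916160, 16482932378548269571096576, 2143515192190905541165056,
   17912868134507348778016768, 1071757596097651792789504, 18627836012486888381476864,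
   535878798051024918601728, 9313918006243444190738432, 267939399025512459300864,
   14328360948354936087837696, 133969699514955251857408, 7164180474179667066125824,
   9738386794988492596190208, 3582090237089833533062912, 4869193397494246298095104,
   11462447063775931736792960, 12105998643980337141516032, 15402625477118980838657984,
   15724401267223382563226496, 7701312738561689441535968, 17533602578842706251874752,
   3850656369283043742974960, 18438203234652368096198880, 11596730129874735863955960,
   9219101617328383070306416, 5798365064939566954184956, 14280952753895206505414712,
   2899182532469783477092478, 7140476376947603252707356, 1449591266234891738546239,
   3570238188473801626353678, 10396197578350659862790175, 1785123705922919239516167,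
   5198103400861348358782991, 10563963798192474591068163, 12270458257345508554833927,
   14953383844329451289051137, 15806635685587588652859395, 17148093867397939638042624]
def Ts : List ℕ := [317247, 228779, 248695, 243069, 81787, 478895, 63451, 226015, 319445, 240831, 260509, 171743, 179699, 372461, 387805, 380731, 189311, 367485, 159737, 250869, 105951, 357877, 241487, 250363, 359371, 321247, 253651]

def tb (m i : ℕ) : Bool := Nat.beq (Nat.land (Nat.shiftRight m i) 1) 1

def force {α : Type} (x : ℕ) (f : ℕ → α) : α :=
  Nat.rec (motive := fun _ => α) (f 0) (fun n _ => f (Nat.succ n)) x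

def mask : ℕ → ℕ → ℕ
  | 0, _ => 0
  | k + 1, j => bif Nat.beq j k then Nat.shiftLeft (Nat.sub (Nat.pow 2 (Nat.pow 2 k)) 1) (Nat.pow 2 k)
      else force (mask k j) fun m => Nat.lor m (Nat.shiftLeft m (Nat.pow 2 k))

/-- saturating binary counter, tests `≥ 9` -/
def cnt : List ℕ → ℕ → ℕ → ℕ → ℕ → ℕ → ℕ
  | [], s0, s1, s2, s3, s4 => Nat.lor s4 (Nat.land s3 (Nat.lor s2 (Nat.lor s1 s0)))
  | x :: L, s0, s1, s2, s3, s4 =>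
    force x fun x =>
    force (Nat.land s0 x) fun c0 =>
    force (Nat.land s1 c0) fun c1 =>
    force (Nat.land s2 c1) fun c2 =>
    force (Nat.land s3 c2) fun c3 =>
    force (Nat.xor s0 x) fun t0 =>
    force (Nat.xor s1 c0) fun t1 =>
    force (Nat.xor s2 c1) fun t2 =>
    force (Nat.xor s3 c2) fun t3 =>
    force (Nat.lor s4 c3) fun t4 =>
    cnt L t0 t1 t2 t3 t4

def red (r p q : ℕ) : ℕ := bif tb q p then Nat.xor q r else q

def mapRed (r p : ℕ) : List ℕ → (List ℕ → Bool) → Bool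
  | [], k => k []
  | q :: L, k => force (red r p q) fun q' => mapRed r p L fun L' =>
      bif Nat.beq q' 0 then k L' else k (q' :: L')

def mapRed2 (r p : ℕ) : List (ℕ × ℕ) → (List (ℕ × ℕ) → Bool) → Bool
  | [], k => k []
  | x :: L, k => force (red r p x.2) fun q' => mapRed2 r p L fun L' => k ((x.1, q') :: L')

def pick (p : ℕ) : List ℕ → ℕ
  | [] => 0
  | q :: L => bif tb q p then q else pick p L

def ge : List ℕ → List (ℕ × ℕ) → List ℕ → List ℕ → (List (ℕ × ℕ) → List ℕ → Bool) → Bool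
  | [], u, _, fr, k => k u fr
  | p :: ps, u, un, fr, k =>
    force (pick p un) fun r =>
      bif Nat.beq r 0 then ge ps u un (p :: fr) k
      else mapRed2 r p u fun u' => mapRed r p un fun un' => ge ps ((p, r) :: u') un' fr k

def go : List (ℕ × ℕ) → ℕ → ℕ → (ℕ → ℕ → Bool) → Bool
  | [], r, acc, k => k r acc
  | x :: L, r, acc, k => bif tb r x.1 then
      force (Nat.xor r (Nat.pow 2 x.1)) fun r' => force (Nat.xor acc x.2) fun acc' => go L r' acc' k
      else go L r acc k

def solve (Sl : List (ℕ × ℕ)) : List (ℕ × ℕ) → List (ℕ × ℕ) → (List (ℕ × ℕ) → Bool) → Bool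
  | [], env, k => k env
  | x :: L, env, k => go Sl x.2 0 fun res acc =>
      bif Nat.beq res (Nat.pow 2 x.1) then solve Sl L ((x.1, acc) :: env) k else false

def build (K : ℕ) : List ℕ → ℕ → List (ℕ × ℕ) → (List (ℕ × ℕ) → Bool) → Bool
  | [], _, env, k => k env
  | f :: L, j, env, k => force (mask K j) fun m => build K L (Nat.succ j) ((f, m) :: env) k

def lk : List (ℕ × ℕ) → ℕ → ℕ
  | [], _ => 0
  | x :: L, i => bif Nat.beq x.1 i then x.2 else lk L i

def inT (T i : ℕ) : Bool := tb T (Nat.mod i 21)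

def bits (T : ℕ) : List ℕ := (List.range 84).filter fun i => inT T i
def zbits (T : ℕ) : List ℕ := (List.range 84).filter fun i => !inT T i
def coords (T : ℕ) : List ℕ := (List.range 42).filter fun i => inT T i

def leaf (rows : List ℕ) (T : ℕ) : Bool :=
  ge (bits T) [] rows [] fun used free =>
    force free.length fun K =>
    build K free 0 ((zbits T).map fun i => (i, 0)) fun Sl =>
    solve Sl used Sl fun env =>
      (env.all fun x => !tb x.2 0) &&
      ((bits T).all fun i => env.any fun x => Nat.beq x.1 i) &&
      Nat.beq (Nat.lor 1 (cnt ((coords T).map fun i => Nat.lor (lk env i) (lk env (Nat.add i 42))) 0 0 0 0 0))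
        (Nat.sub (Nat.pow 2 (Nat.pow 2 K)) 1)

def fullN (K : ℕ) : ℕ := Nat.sub (Nat.pow 2 (Nat.pow 2 K)) 1

def nmasks : List ℕ → (List (ℕ × ℕ) → Bool) → Bool
  | [], k => k []
  | j :: L, k => force (Nat.xor (fullN 20) (mask 20 j)) fun m =>
      nmasks L fun L' => k ((j, m) :: L')

def term (T s : ℕ) : List (ℕ × ℕ) → ℕ → (ℕ → Bool) → Bool
  | [], acc, k => k acc
  | x :: L, acc, k => bif tb T (Nat.mod (Nat.add (Nat.succ x.1) s) 21) then term T s L acc k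
      else force (Nat.land acc x.2) fun acc' => term T s L acc' k

def terms (nm : List (ℕ × ℕ)) (full : ℕ) : List (ℕ × ℕ) → ℕ → (ℕ → Bool) → Bool
  | [], acc, k => k acc
  | x :: L, acc, k => bif tb x.1 x.2 then
      term x.1 x.2 nm full fun m => force (Nat.lor acc m) fun acc' => terms nm full L acc' k
      else terms nm full L acc k

def pairsTs : List (ℕ × ℕ) := Ts.flatMap fun T => (List.range 21).map fun s => (T, s)

def cover : Bool :=
  force (fullN 20) fun full =>
  nmasks (List.range 20) fun nm =>
  terms nm full pairsTs 0 fun cov =>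
  Nat.beq (Nat.lor cov (cnt (full :: (List.range 20).map fun j => mask 20 j) 0 0 0 0 0)) full


theorem tb_eq (m i : ℕ) : tb m i = m.testBit i := by
  have h : Nat.land (Nat.shiftRight m i) 1 = (m >>> i) % 2 := by
    change (m >>> i) &&& 1 = _
    exact Nat.and_one_is_mod _
  unfold tb
  rw [h, Nat.testBit_eq_decide_div_mod_eq, Nat.shiftRight_eq_div_pow]
  by_cases hh : m / 2 ^ i % 2 = 1
  · rw [hh]; rfl
  · have : m / 2 ^ i % 2 = 0 := by omega
    rw [this]; rfl

theorem force_eq {α : Type} (x : ℕ) (f : ℕ → α) : force x f = f x := by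
  cases x <;> rfl

theorem nlor (a b : ℕ) : Nat.lor a b = a ||| b := rfl
theorem nland (a b : ℕ) : Nat.land a b = a &&& b := rfl
theorem nxor (a b : ℕ) : Nat.xor a b = a ^^^ b := rfl
theorem npow (a b : ℕ) : Nat.pow a b = a ^ b := rfl
theorem nsub (a b : ℕ) : Nat.sub a b = a - b := rfl
theorem nadd (a b : ℕ) : Nat.add a b = a + b := rfl
theorem nmod (a b : ℕ) : Nat.mod a b = a % b := rfl
theorem nshl (a b : ℕ) : Nat.shiftLeft a b = a <<< b := rfl

theorem mask_lt (k j : ℕ) : mask k j < 2 ^ (2 ^ k) := by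
  induction k with
  | zero => simp [mask]
  | succ k ih =>
    have e : 2 ^ (2 ^ (k + 1)) = 2 ^ (2 ^ k) * 2 ^ (2 ^ k) := by
      rw [← pow_add]; congr 1; ring
    have hpos : 0 < 2 ^ (2 ^ k) := by positivity
    have key : ∀ m, m < 2 ^ (2 ^ k) → m <<< (2 ^ k) < 2 ^ (2 ^ (k + 1)) := by
      intro m hm
      rw [Nat.shiftLeft_eq, e]
      exact Nat.mul_lt_mul_of_pos_right hm hpos
    simp only [mask, force_eq, nlor, npow, nsub, nshl]
    cases Nat.beq j k
    · simp only [cond_false]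
      refine Nat.or_lt_two_pow ?_ (key _ ih)
      refine lt_of_lt_of_le ih ?_
      rw [e]; exact Nat.le_mul_of_pos_right _ hpos
    · simp only [cond_true]
      exact key _ (by omega)

theorem mask_spec (k j t : ℕ) (hj : j < k) (ht : t < 2 ^ k) :
    (mask k j).testBit t = t.testBit j := by
  induction k generalizing t with
  | zero => omega
  | succ k ih =>
    have e : 2 ^ (k + 1) = 2 ^ k + 2 ^ k := by ring
    simp only [mask, force_eq, nlor, npow, nsub, nshl]
    cases hb : Nat.beq j k
    · have hjk : j < k := by
        have : j ≠ k := Nat.ne_of_beq_eq_false hb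
        omega
      simp only [cond_false, Nat.testBit_or, Nat.testBit_shiftLeft]
      by_cases h : 2 ^ k ≤ t
      · obtain ⟨u, rfl⟩ := Nat.exists_eq_add_of_le h
        rw [Nat.testBit_eq_false_of_lt (lt_of_lt_of_le (mask_lt k j)
          (Nat.pow_le_pow_right (by norm_num) h))]
        rw [Nat.testBit_two_pow_add_gt hjk]
        simp [ih u hjk (by omega)]
      · simp [h, ih t hjk (by omega)]
    · have hjk : j = k := Nat.eq_of_beq_eq_true hb
      subst hjk
      simp only [cond_true, Nat.testBit_shiftLeft, Nat.testBit_two_pow_sub_one]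
      by_cases h : 2 ^ j ≤ t
      · obtain ⟨u, rfl⟩ := Nat.exists_eq_add_of_le h
        rw [Nat.testBit_two_pow_add_eq, Nat.testBit_eq_false_of_lt (by omega : u < 2 ^ j)]
        simp; omega
      · rw [Nat.testBit_eq_false_of_lt (by omega : t < 2 ^ j)]
        simp [h]

def val (a b c d e : Bool) : ℕ := a.toNat + 2 * b.toNat + 4 * c.toNat + 8 * d.toNat + 16 * e.toNat

theorem val_step : ∀ a b c d e x : Bool,
    val (a ^^ x) (b ^^ (a && x)) (c ^^ (b && (a && x))) (d ^^ (c && (b && (a && x))))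
      (e || (d && (c && (b && (a && x))))) ≤ val a b c d e + x.toNat := by decide

theorem val_end : ∀ a b c d e : Bool, (e || (d && (c || (b || a)))) = true → 9 ≤ val a b c d e := by
  decide

theorem cnt_spec (t : ℕ) (L : List ℕ) : ∀ s0 s1 s2 s3 s4 : ℕ,
    (cnt L s0 s1 s2 s3 s4).testBit t = true →
    9 ≤ L.countP (fun x => x.testBit t) +
      val (s0.testBit t) (s1.testBit t) (s2.testBit t) (s3.testBit t) (s4.testBit t) := by
  induction L with
  | nil =>
    intro s0 s1 s2 s3 s4 h
    simp only [cnt, nlor, nland, Nat.testBit_or, Nat.testBit_and] at h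
    simpa using val_end _ _ _ _ _ h
  | cons x L ih =>
    intro s0 s1 s2 s3 s4 h
    simp only [cnt, force_eq, nlor, nland, nxor] at h
    have h1 := ih _ _ _ _ _ h
    simp only [Nat.testBit_or, Nat.testBit_and, Nat.testBit_xor] at h1
    have h2 := val_step (s0.testBit t) (s1.testBit t) (s2.testBit t) (s3.testBit t)
      (s4.testBit t) (x.testBit t)
    have h3 : (x :: L).countP (fun x => x.testBit t)
        = L.countP (fun x => x.testBit t) + (x.testBit t).toNat := by
      rw [List.countP_cons]; cases x.testBit t <;> rfl
    omega

/-! parities -/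

def xs : ℕ → (ℕ → Bool) → Bool
  | 0, _ => false
  | n + 1, f => xs n f ^^ f n

theorem xs_xor (n : ℕ) (f g : ℕ → Bool) : xs n (fun i => f i ^^ g i) = (xs n f ^^ xs n g) := by
  induction n with
  | zero => rfl
  | succ n ih =>
    simp only [xs, ih]
    cases xs n f <;> cases xs n g <;> cases f n <;> cases g n <;> rfl

theorem xs_congr (n : ℕ) (f g : ℕ → Bool) (h : ∀ i < n, f i = g i) : xs n f = xs n g := by
  induction n with
  | zero => rfl
  | succ n ih =>
    simp only [xs]
    rw [ih (fun i hi => h i (by omega)), h n (by omega)]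

theorem xs_add (n m : ℕ) (f : ℕ → Bool) : xs (n + m) f = (xs n f ^^ xs m (fun i => f (n + i))) := by
  induction m with
  | zero => simp [xs]
  | succ m ih =>
    rw [← Nat.add_assoc]
    simp only [xs, ih, Bool.xor_assoc]

def par (m : ℕ) (w : ℕ → Bool) : Bool := xs 84 fun i => m.testBit i && w i

theorem par_xor (m m' : ℕ) (w : ℕ → Bool) : par (m ^^^ m') w = (par m w ^^ par m' w) := by
  unfold par
  rw [← xs_xor]
  apply xs_congr
  intro i _
  rw [Nat.testBit_xor]
  cases m.testBit i <;> cases m'.testBit i <;> cases w i <;> rfl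

theorem par_two_pow (p : ℕ) (hp : p < 84) (w : ℕ → Bool) : par (2 ^ p) w = w p := by
  have : ∀ n, xs n (fun i => (2 ^ p).testBit i && w i) = (decide (p < n) && w p) := by
    intro n
    induction n with
    | zero => simp [xs]
    | succ n ih =>
      rw [xs, ih, Nat.testBit_two_pow]
      rcases lt_trichotomy p n with h | h | h
      · have h1 : p < n + 1 := by omega
        have h2 : p ≠ n := by omega
        simp [h, h1, h2]
      · subst h; simp
      · have h1 : ¬ p < n + 1 := by omega
        have h2 : p ≠ n := by omega
        have h3 : ¬ p < n := by omega
        simp [h1, h2, h3]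
  unfold par
  rw [this]; simp [hp]

/-! soundness of the elimination -/

section
variable (w : ℕ → Bool)

theorem par_red (r p q : ℕ) (hr : par r w = false) (hq : par q w = false) :
    par (red r p q) w = false := by
  unfold red
  cases tb q p
  · simpa using hq
  · simp [par_xor, hr, hq]

theorem mapRed_sound (r p : ℕ) (hr : par r w = false) (L : List ℕ) :
    ∀ k : List ℕ → Bool, (∀ q ∈ L, par q w = false) → mapRed r p L k = true →
    ∃ L', (∀ q ∈ L', par q w = false) ∧ k L' = true := by
  induction L with
  | nil => intro k _ h; exact ⟨[], by simp, h⟩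
  | cons q L ih =>
    intro k hL h
    simp only [mapRed, force_eq] at h
    obtain ⟨L', h1, h2⟩ := ih _ (fun q hq => hL q (by simp [hq])) h
    cases hb : Nat.beq (red r p q) 0
    · rw [hb] at h2
      refine ⟨_, ?_, h2⟩
      intro x hx
      rcases List.mem_cons.1 hx with rfl | hx
      · exact par_red w r p q hr (hL q (by simp))
      · exact h1 x hx
    · rw [hb] at h2
      exact ⟨L', h1, h2⟩

theorem mapRed2_sound (r p : ℕ) (hr : par r w = false) (L : List (ℕ × ℕ)) :
    ∀ k : List (ℕ × ℕ) → Bool, (∀ x ∈ L, par x.2 w = false ∧ x.1 < 84) → mapRed2 r p L k = true →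
    ∃ L' : List (ℕ × ℕ), (∀ x ∈ L', par x.2 w = false ∧ x.1 < 84) ∧ k L' = true := by
  induction L with
  | nil => intro k _ h; exact ⟨[], by simp, h⟩
  | cons x L ih =>
    intro k hL h
    simp only [mapRed2, force_eq] at h
    obtain ⟨L', h1, h2⟩ := ih _ (fun q hq => hL q (by simp [hq])) h
    refine ⟨_, ?_, h2⟩
    intro y hy
    rcases List.mem_cons.1 hy with rfl | hy
    · exact ⟨par_red w r p _ hr (hL x (by simp)).1, (hL x (by simp)).2⟩
    · exact h1 y hy

theorem par_zero : par 0 w = false := by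
  have := par_xor 0 0 w
  simpa using this

theorem pick_sound (p : ℕ) (L : List ℕ) (h : ∀ q ∈ L, par q w = false) :
    par (pick p L) w = false := by
  induction L with
  | nil => exact par_zero w
  | cons q L ih =>
    simp only [pick]
    cases tb q p
    · simpa using ih fun q hq => h q (by simp [hq])
    · simpa using h q (by simp)

theorem ge_sound (ps : List ℕ) : ∀ (u : List (ℕ × ℕ)) (un fr : List ℕ)
    (k : List (ℕ × ℕ) → List ℕ → Bool),
    (∀ p ∈ ps, p < 84) → (∀ x ∈ u, par x.2 w = false ∧ x.1 < 84) → (∀ q ∈ un, par q w = false) →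
    (∀ f ∈ fr, f < 84) → ge ps u un fr k = true →
    ∃ (u' : List (ℕ × ℕ)) (fr' : List ℕ), (∀ x ∈ u', par x.2 w = false ∧ x.1 < 84) ∧
      (∀ f ∈ fr', f < 84) ∧ k u' fr' = true := by
  induction ps with
  | nil => intro u un fr k _ hu _ hfr h; exact ⟨u, fr, hu, hfr, h⟩
  | cons p ps ih =>
    intro u un fr k hp hu hun hfr h
    simp only [ge, force_eq] at h
    have hr := pick_sound w p un hun
    cases hb : Nat.beq (pick p un) 0
    · rw [hb] at h
      obtain ⟨u', hu', h⟩ := mapRed2_sound w _ p hr u _ hu h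
      obtain ⟨un', hun', h⟩ := mapRed_sound w _ p hr un _ hun h
      refine ih _ un' fr k (fun p hp' => hp p (by simp [hp'])) ?_ hun' hfr h
      intro x hx
      rcases List.mem_cons.1 hx with rfl | hx
      · exact ⟨hr, hp _ (by simp)⟩
      · exact hu' x hx
    · rw [hb] at h
      refine ih u un _ k (fun p hp' => hp p (by simp [hp'])) hu hun ?_ h
      intro f hf
      rcases List.mem_cons.1 hf with rfl | hf
      · exact hp _ (by simp)
      · exact hfr f hf

/-- the slices in `env` describe `w` at the index `t` -/
def Good (t : ℕ) (env : List (ℕ × ℕ)) : Prop := ∀ x ∈ env, x.1 < 84 ∧ x.2.testBit t = w x.1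

theorem go_sound (t : ℕ) (L : List (ℕ × ℕ)) (hL : ∀ x ∈ L, x.1 < 84 ∧ x.2.testBit t = w x.1) :
    ∀ (r acc : ℕ) (k : ℕ → ℕ → Bool), par r w = acc.testBit t → go L r acc k = true →
    ∃ r' acc', par r' w = acc'.testBit t ∧ k r' acc' = true := by
  induction L with
  | nil => intro r acc k h1 h2; exact ⟨r, acc, h1, h2⟩
  | cons x L ih =>
    intro r acc k h1 h2
    simp only [go, force_eq] at h2
    have ih' := ih fun y hy => hL y (by simp [hy])
    cases hb : tb r x.1
    · rw [hb] at h2; exact ih' r acc k h1 h2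
    · rw [hb] at h2
      refine ih' _ _ k ?_ h2
      obtain ⟨ha, hb⟩ := hL x (by simp)
      rw [nxor, nxor, npow, par_xor, par_two_pow _ ha, Nat.testBit_xor, h1, hb]

theorem solve_sound (t : ℕ) (Sl : List (ℕ × ℕ)) (hSl : Good w t Sl) (L : List (ℕ × ℕ)) :
    ∀ (env : List (ℕ × ℕ)) (k : List (ℕ × ℕ) → Bool),
    (∀ x ∈ L, par x.2 w = false ∧ x.1 < 84) → Good w t env → solve Sl L env k = true →
    ∃ env', Good w t env' ∧ k env' = true := by
  induction L with
  | nil => intro env k _ h1 h2; exact ⟨env, h1, h2⟩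
  | cons x L ih =>
    intro env k hL henv h
    simp only [solve] at h
    obtain ⟨hx1, hx2⟩ := hL x (by simp)
    obtain ⟨r', acc', h1, h2⟩ := go_sound w t Sl hSl x.2 0 _ (by simp [hx1]) h
    cases hb : Nat.beq r' (Nat.pow 2 x.1)
    · rw [hb] at h2; cases h2
    · rw [hb] at h2
      have hr : r' = 2 ^ x.1 := Nat.eq_of_beq_eq_true hb
      subst hr
      rw [par_two_pow _ hx2] at h1
      refine ih _ k (fun y hy => hL y (by simp [hy])) ?_ h2
      intro y hy
      rcases List.mem_cons.1 hy with rfl | hy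
      · exact ⟨hx2, h1.symm⟩
      · exact henv y hy

theorem build_sound (t K : ℕ) (ht : t < 2 ^ K) (L : List ℕ) :
    ∀ (j : ℕ) (env : List (ℕ × ℕ)) (k : List (ℕ × ℕ) → Bool),
    j + L.length = K → (∀ i (h : i < L.length), L[i] < 84 ∧ t.testBit (j + i) = w L[i]) →
    Good w t env → build K L j env k = true →
    ∃ env', Good w t env' ∧ k env' = true := by
  induction L with
  | nil => intro j env k _ _ h1 h2; exact ⟨env, h1, h2⟩
  | cons f L ih =>
    intro j env k hK hL henv h
    simp only [build, force_eq] at h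
    simp only [List.length_cons] at hK hL
    refine ih _ _ k (by omega) ?_ ?_ h
    · intro i hi
      have := hL (i + 1) (by omega)
      simp only [List.getElem_cons_succ] at this
      rwa [show j.succ + i = j + (i + 1) by omega]
    · intro y hy
      rcases List.mem_cons.1 hy with rfl | hy
      · have := hL 0 (by omega)
        simp only [List.getElem_cons_zero, add_zero] at this
        exact ⟨this.1, by rw [mask_spec _ _ _ (by omega) ht]; exact this.2⟩
      · exact henv y hy

theorem lk_sound (t : ℕ) (env : List (ℕ × ℕ)) (h : Good w t env) (i : ℕ)
    (h1 : (lk env i).testBit t = true) : w i = true := by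
  induction env with
  | nil => simp [lk] at h1
  | cons x L ih =>
    simp only [lk] at h1
    cases hb : Nat.beq x.1 i
    · rw [hb] at h1
      exact ih (fun y hy => h y (by simp [hy])) h1
    · rw [hb] at h1
      have : x.1 = i := Nat.eq_of_beq_eq_true hb
      rw [← this, ← (h x (by simp)).2]; exact h1


theorem exists_bits (K : ℕ) (f : ℕ → Bool) : ∃ t, t < 2 ^ K ∧ ∀ i < K, t.testBit i = f i := by
  refine ⟨Nat.ofBits (fun i : Fin K => f i), Nat.ofBits_lt_two_pow _, fun i hi => ?_⟩
  rw [Nat.testBit_ofBits_lt _ _ hi]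

theorem leaf_sound (rows : List ℕ) (T : ℕ) (h : leaf rows T = true)
    (hrows : ∀ r ∈ rows, par r w = false)
    (hz : ∀ i < 84, inT T i = false → w i = false)
    (hne : ∃ i < 84, w i = true) :
    9 ≤ (List.range 42).countP (fun i => w i || w (i + 42)) := by
  unfold leaf at h
  obtain ⟨used, free, hu, hf, h⟩ := ge_sound w (bits T) [] rows [] _
    (by intro p hp; simp [bits] at hp; exact hp.1) (by simp) hrows (by simp) h
  rw [force_eq] at h
  obtain ⟨t, ht, htb⟩ := exists_bits free.length (fun i => w (free.getD i 0))
  obtain ⟨Sl, hSl, h⟩ := build_sound w t free.length ht free 0 _ _ (by simp) (by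
      intro i hi
      refine ⟨hf _ (List.getElem_mem hi), ?_⟩
      rw [zero_add, htb i hi]
      simp [hi]) (by
      intro x hx
      simp only [zbits, List.mem_map, List.mem_filter, List.mem_range] at hx
      obtain ⟨i, ⟨hi1, hi2⟩, rfl⟩ := hx
      refine ⟨hi1, ?_⟩
      rw [hz i hi1 (by simpa using hi2)]
      simp) h
  obtain ⟨env, henv, h⟩ := solve_sound w t Sl hSl used _ _ hu hSl h
  simp only [Bool.and_eq_true, List.all_eq_true, List.any_eq_true] at h
  obtain ⟨⟨h1, h2⟩, h3⟩ := h
  have h3 := Nat.eq_of_beq_eq_true h3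
  have ht0 : t ≠ 0 := by
    rintro rfl
    obtain ⟨i, hi, hw⟩ := hne
    have hiT : inT T i = true := by
      by_contra hc
      rw [hz i hi (by simpa using hc)] at hw
      cases hw
    obtain ⟨x, hx, hxi⟩ := h2 i (by simp [bits, hi, hiT])
    have hxi := Nat.eq_of_beq_eq_true hxi
    have hx1 := h1 x hx
    have hx2 := (henv x hx).2
    rw [tb_eq, hx2, hxi, hw] at hx1
    cases hx1
  have h4 := congrArg (fun n => Nat.testBit n t) h3
  simp only [nlor, npow, nsub, Nat.testBit_or, Nat.testBit_two_pow_sub_one, ht, decide_true,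
    Nat.testBit_one_eq_true_iff_self_eq_zero, Bool.or_eq_true, ht0, false_or] at h4
  have h5 := cnt_spec t _ _ _ _ _ _ h4
  simp only [Nat.zero_testBit] at h5
  have h6 : val false false false false false = 0 := rfl
  rw [h6, add_zero, List.countP_map] at h5
  refine h5.trans ?_
  unfold coords
  refine le_trans (List.Sublist.countP_le List.filter_sublist) ?_
  apply List.countP_mono_left
  intro i _ hi
  simp only [Function.comp_apply, Nat.testBit_or, nadd, Bool.or_eq_true] at hi
  rw [Bool.or_eq_true]
  exact hi.imp (lk_sound w t env henv _) (lk_sound w t env henv _)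

end

/-! soundness of the covering check -/

theorem full_tb (K t : ℕ) (ht : t < 2 ^ K) :
    Nat.testBit (fullN K) t = true := by
  rw [fullN, nsub, npow, npow, Nat.testBit_two_pow_sub_one]
  simp only [ht, decide_true]

theorem nmasks_sound (t : ℕ) (ht : t < 2 ^ 20) (L : List ℕ) (hL : ∀ j ∈ L, j < 20) :
    ∀ k : List (ℕ × ℕ) → Bool, nmasks L k = true →
    ∃ nm : List (ℕ × ℕ), nm.map Prod.fst = L ∧ (∀ x ∈ nm, x.2.testBit t = !t.testBit x.1) ∧
      k nm = true := by
  induction L with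
  | nil => intro k h; exact ⟨[], by simp, by simp, h⟩
  | cons j L ih =>
    intro k h
    rw [nmasks, force_eq] at h
    obtain ⟨nm, h1, h2, h3⟩ := ih (fun j hj => hL j (by simp [hj])) _ h
    refine ⟨_, ?_, ?_, h3⟩
    · simp [h1]
    · intro x hx
      rcases List.mem_cons.1 hx with rfl | hx
      · simp only [nxor]
        rw [Nat.testBit_xor, mask_spec 20 j t (hL j (by simp)) ht, full_tb 20 t ht, Bool.true_xor]
      · exact h2 x hx

theorem term_sound (t T s : ℕ) (L : List (ℕ × ℕ)) (hL : ∀ x ∈ L, x.2.testBit t = !t.testBit x.1) :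
    ∀ (acc : ℕ) (k : ℕ → Bool), term T s L acc k = true →
    ∃ m, k m = true ∧ (m.testBit t = true → acc.testBit t = true ∧
      ∀ x ∈ L, tb T ((x.1 + 1 + s) % 21) = false → t.testBit x.1 = false) := by
  induction L with
  | nil => intro acc k h; exact ⟨acc, h, by simp⟩
  | cons x L ih =>
    intro acc k h
    have ih := ih fun y hy => hL y (by simp [hy])
    have e : tb T (Nat.mod (Nat.add (Nat.succ x.1) s) 21) = tb T ((x.1 + 1 + s) % 21) := rfl
    rw [term, e] at h
    cases hb : tb T ((x.1 + 1 + s) % 21)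
    · rw [hb, cond_false, force_eq] at h
      obtain ⟨m, h1, h2⟩ := ih _ _ h
      refine ⟨m, h1, fun hm => ?_⟩
      obtain ⟨h3, h4⟩ := h2 hm
      rw [nland, Nat.testBit_and, Bool.and_eq_true] at h3
      refine ⟨h3.1, fun y hy hy2 => ?_⟩
      rcases List.mem_cons.1 hy with rfl | hy
      · have := hL y (by simp)
        rw [h3.2] at this
        simpa using this
      · exact h4 y hy hy2
    · rw [hb, cond_true] at h
      obtain ⟨m, h1, h2⟩ := ih _ _ h
      refine ⟨m, h1, fun hm => ?_⟩
      obtain ⟨h3, h4⟩ := h2 hm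
      refine ⟨h3, fun y hy hy2 => ?_⟩
      rcases List.mem_cons.1 hy with rfl | hy
      · rw [hb] at hy2; cases hy2
      · exact h4 y hy hy2

theorem terms_sound (t : ℕ) (nm : List (ℕ × ℕ)) (full : ℕ)
    (hnm : ∀ x ∈ nm, x.2.testBit t = !t.testBit x.1) (P : List (ℕ × ℕ)) (L : List (ℕ × ℕ)) :
    ∀ (acc : ℕ) (k : ℕ → Bool), (∀ x ∈ L, x ∈ P) →
    (acc.testBit t = true → ∃ y ∈ P, tb y.1 y.2 = true ∧
      ∀ x ∈ nm, tb y.1 ((x.1 + 1 + y.2) % 21) = false → t.testBit x.1 = false) →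
    terms nm full L acc k = true →
    ∃ m, k m = true ∧ (m.testBit t = true → ∃ y ∈ P, tb y.1 y.2 = true ∧
      ∀ x ∈ nm, tb y.1 ((x.1 + 1 + y.2) % 21) = false → t.testBit x.1 = false) := by
  induction L with
  | nil => intro acc k _ h1 h; exact ⟨acc, h, h1⟩
  | cons x L ih =>
    intro acc k hP h1 h
    rw [terms] at h
    cases hb : tb x.1 x.2
    · rw [hb, cond_false] at h
      exact ih acc k (fun y hy => hP y (by simp [hy])) h1 h
    · rw [hb, cond_true] at h
      obtain ⟨m, h2, h3⟩ := term_sound t x.1 x.2 nm hnm _ _ h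
      rw [force_eq] at h2
      refine ih _ k (fun y hy => hP y (by simp [hy])) ?_ h2
      intro h4
      rw [nlor, Nat.testBit_or, Bool.or_eq_true] at h4
      rcases h4 with h4 | h4
      · exact h1 h4
      · exact ⟨x, hP x (by simp), hb, (h3 h4).2⟩

theorem cover_sound (h : cover = true) (t : ℕ) (ht : t < 2 ^ 20)
    (hc : (List.range 20).countP (fun i => t.testBit i) < 8) :
    ∃ T ∈ Ts, ∃ s < 21, tb T s = true ∧
      ∀ i < 20, tb T ((i + 1 + s) % 21) = false → t.testBit i = false := by
  unfold cover at h
  rw [force_eq] at h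
  obtain ⟨nm, h1, h2, h⟩ := nmasks_sound t ht _ (by intro j hj; simpa using hj) _ h
  obtain ⟨cov, h, h3⟩ := terms_sound t nm _ h2 pairsTs pairsTs 0 _ (fun _ hx => hx) (by simp) h
  have h := Nat.eq_of_beq_eq_true h
  have h4 := congrArg (fun n => Nat.testBit n t) h
  have hfull : Nat.testBit (fullN 20) t = true := full_tb 20 t ht
  simp only [hfull, nlor, Nat.testBit_or, Bool.or_eq_true] at h4
  rcases h4 with h4 | h4
  · obtain ⟨y, hy, hy1, hy2⟩ := h3 h4
    simp only [pairsTs, List.mem_flatMap, List.mem_map, List.mem_range] at hy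
    obtain ⟨T, hT, s, hs, rfl⟩ := hy
    refine ⟨T, hT, s, hs, hy1, fun i hi hti => ?_⟩
    have : i ∈ nm.map Prod.fst := by rw [h1]; simpa using hi
    obtain ⟨x, hx, rfl⟩ := List.mem_map.1 this
    exact hy2 x hx hti
  · exfalso
    have h5 := cnt_spec t _ _ _ _ _ _ h4
    simp only [Nat.zero_testBit] at h5
    have h6 : val false false false false false = 0 := rfl
    rw [h6, add_zero, List.countP_cons, List.countP_map] at h5
    have h7 : (List.range 20).countP ((fun x => Nat.testBit x t) ∘ fun j => mask 20 j)
        = (List.range 20).countP (fun i => t.testBit i) := by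
      apply List.countP_congr
      intro j hj
      rw [Function.comp_apply, mask_spec 20 j t (by simpa using hj) ht]
    rw [h7, if_pos hfull] at h5
    omega

/-! the computable model of the field with four elements -/

structure K4 where
  a : Bool
  b : Bool
deriving DecidableEq

namespace K4

instance : Zero K4 := ⟨⟨false, false⟩⟩
instance : One K4 := ⟨⟨true, false⟩⟩
instance : Add K4 := ⟨fun x y => ⟨x.a ^^ y.a, x.b ^^ y.b⟩⟩
instance : Neg K4 := ⟨fun x => x⟩
instance : Mul K4 := ⟨fun x y => ⟨(x.a && y.a) ^^ (x.b && y.b),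
  (x.a && y.b) ^^ ((x.b && y.a) ^^ (x.b && y.b))⟩⟩

instance : CommRing K4 where
  add_assoc := by rintro ⟨_ | _, _ | _⟩ ⟨_ | _, _ | _⟩ ⟨_ | _, _ | _⟩ <;> rfl
  zero_add := by rintro ⟨_ | _, _ | _⟩ <;> rfl
  add_zero := by rintro ⟨_ | _, _ | _⟩ <;> rfl
  add_comm := by rintro ⟨_ | _, _ | _⟩ ⟨_ | _, _ | _⟩ <;> rfl
  nsmul := nsmulRec
  zsmul := zsmulRec
  neg_add_cancel := by rintro ⟨_ | _, _ | _⟩ <;> rfl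
  mul_assoc := by rintro ⟨_ | _, _ | _⟩ ⟨_ | _, _ | _⟩ ⟨_ | _, _ | _⟩ <;> rfl
  one_mul := by rintro ⟨_ | _, _ | _⟩ <;> rfl
  mul_one := by rintro ⟨_ | _, _ | _⟩ <;> rfl
  zero_mul := by rintro ⟨_ | _, _ | _⟩ <;> rfl
  mul_zero := by rintro ⟨_ | _, _ | _⟩ <;> rfl
  mul_comm := by rintro ⟨_ | _, _ | _⟩ ⟨_ | _, _ | _⟩ <;> rfl
  left_distrib := by rintro ⟨_ | _, _ | _⟩ ⟨_ | _, _ | _⟩ ⟨_ | _, _ | _⟩ <;> rfl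
  right_distrib := by rintro ⟨_ | _, _ | _⟩ ⟨_ | _, _ | _⟩ ⟨_ | _, _ | _⟩ <;> rfl

theorem add_a (x y : K4) : (x + y).a = (x.a ^^ y.a) := rfl
theorem mul_a (x y : K4) : (x * y).a = ((x.a && y.a) ^^ (x.b && y.b)) := rfl
theorem zero_a : (0 : K4).a = false := rfl
theorem zero_b : (0 : K4).b = false := rfl

theorem ne_zero_iff (x : K4) : x ≠ 0 ↔ (x.a || x.b) = true := by
  rcases x with ⟨_ | _, _ | _⟩ <;> decide

end K4

def om : K4 := ⟨false, true⟩

theorem exists_omega : ∃ x : GaloisField 2 2, x ^ 2 = x + 1 := by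
  have : Finite (GaloisField 2 2) := inferInstance
  have := Fintype.ofFinite (GaloisField 2 2)
  have hc : Fintype.card (GaloisField 2 2) = 4 := by
    rw [← Nat.card_eq_fintype_card, GaloisField.card 2 2 (by norm_num)]; norm_num
  classical
  obtain ⟨x, hx⟩ : ∃ x : GaloisField 2 2, x ∉ ({0, 1} : Finset (GaloisField 2 2)) := by
    by_contra hcon
    push Not at hcon
    have h1 : (Finset.univ : Finset (GaloisField 2 2)) ⊆ {0, 1} := fun x _ => hcon x
    have h2 := Finset.card_le_card h1
    have h3 : ({0, 1} : Finset (GaloisField 2 2)).card ≤ 2 := Finset.card_le_two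
    rw [Finset.card_univ, hc] at h2
    omega
  simp only [Finset.mem_insert, Finset.mem_singleton, not_or] at hx
  have h4 : x ^ 4 = x := by rw [← hc]; exact FiniteField.pow_card x
  have h5 : x * (x - 1) * (x ^ 2 + x + 1) = 0 := by linear_combination h4
  have h6 : x ^ 2 + x + 1 = 0 := by
    rcases mul_eq_zero.1 h5 with h | h
    · rcases mul_eq_zero.1 h with h | h
      · exact absurd h hx.1
      · exact absurd (sub_eq_zero.1 h) hx.2
    · exact h
  have h7 : (2 : GaloisField 2 2) = 0 := CharTwo.two_eq_zero
  exact ⟨x, by linear_combination h6 - (x + 1) * h7⟩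

theorem exists_equiv : Nonempty (K4 ≃+* GaloisField 2 2) := by
  obtain ⟨ω, hω⟩ := exists_omega
  have h7 : (2 : GaloisField 2 2) = 0 := CharTwo.two_eq_zero
  let f : K4 → GaloisField 2 2 := fun x => (if x.a then 1 else 0) + (if x.b then ω else 0)
  have hω0 : ω ≠ 0 := by rintro rfl; simp at hω
  have hω1 : 1 + ω ≠ 0 := by
    intro h
    have : ω ^ 2 = 0 := by rw [hω]; linear_combination h
    exact hω0 (pow_eq_zero_iff (by norm_num) |>.1 this)
  let φ : K4 →+* GaloisField 2 2 :=
    { toFun := f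
      map_one' := by change (1 : GaloisField 2 2) + 0 = 1; simp
      map_zero' := by change (0 : GaloisField 2 2) + 0 = 0; simp
      map_add' := by
        rintro ⟨a, b⟩ ⟨c, d⟩
        change f ⟨a ^^ c, b ^^ d⟩ = f ⟨a, b⟩ + f ⟨c, d⟩
        cases a <;> cases b <;> cases c <;> cases d <;>
          simp only [f, Bool.xor_true, Bool.xor_false, Bool.not_true, Bool.not_false,
            if_true, Bool.false_eq_true, if_false] <;>
          first
          | ring1
          | linear_combination (-1) * h7
          | linear_combination (-ω) * h7
          | linear_combination (-1 - ω) * h7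
      map_mul' := by
        rintro ⟨a, b⟩ ⟨c, d⟩
        change f ⟨(a && c) ^^ (b && d), (a && d) ^^ ((b && c) ^^ (b && d))⟩ = f ⟨a, b⟩ * f ⟨c, d⟩
        cases a <;> cases b <;> cases c <;> cases d <;>
          simp only [f, Bool.xor_true, Bool.xor_false, Bool.not_true, Bool.not_false,
            Bool.and_true, Bool.and_false, if_true, Bool.false_eq_true, if_false] <;>
          first
          | ring1
          | linear_combination (-1) * hω
          | linear_combination (-1) * hω - ω * h7
          | linear_combination (-1) * hω - (ω + 1) * h7 }
  have hinj : Function.Injective φ := by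
    rw [injective_iff_map_eq_zero]
    rintro ⟨_ | _, _ | _⟩ h
    · rfl
    · exact absurd (by simpa [φ, f] using h) hω0
    · exact absurd h (by simp [φ, f])
    · exact absurd (by simpa [φ, f] using h) hω1
  have hK : Nat.card K4 = 4 := by
    have e : K4 ≃ Bool × Bool := ⟨fun x => (x.a, x.b), fun x => ⟨x.1, x.2⟩, fun _ => rfl, fun _ => rfl⟩
    rw [Nat.card_congr e]; simp
  have hF : Nat.card (GaloisField 2 2) = 4 := by
    rw [GaloisField.card 2 2 (by norm_num)]; norm_num
  have : Finite K4 := Nat.finite_of_card_ne_zero (by omega)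
  have hbij : Function.Bijective φ := by
    have := Fintype.ofFinite K4
    have := Fintype.ofFinite (GaloisField 2 2)
    rw [Fintype.bijective_iff_injective_and_card]
    refine ⟨hinj, ?_⟩
    rw [← Nat.card_eq_fintype_card, ← Nat.card_eq_fintype_card, hK, hF]
  exact ⟨RingEquiv.ofBijective φ hbij⟩

/-! code data -/

def g (i : Fin 42) : K4 := ⟨tb gA i, tb gB i⟩
def A (p : Fin 16) (j : Fin 26) : K4 := ⟨tb AA (26 * p + j), tb AB (26 * p + j)⟩
def uw (i : Fin 42) : K4 := ⟨tb uA i, tb uB i⟩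

def sg (s : ℕ) (i : Fin 42) : Fin 42 :=
  ⟨(i : ℕ) / 21 * 21 + ((i : ℕ) % 21 + s) % 21, by omega⟩

def lft (p : Fin 16) : Fin 42 := ⟨p, by omega⟩
def rgt (j : Fin 26) : Fin 42 := ⟨16 + j, by omega⟩

theorem sum42 {M : Type} [AddCommMonoid M] (f : Fin 42 → M) :
    ∑ i, f i = ∑ p, f (lft p) + ∑ j, f (rgt j) := by
  exact Fin.sum_univ_add (a := 16) (b := 26) f

theorem A_unitary : ∀ p q : Fin 16, ∑ j, A p j * (A q j * A q j) = if p = q then 1 else 0 := by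
  decide +kernel

theorem g_rows : ∀ s : Fin 21, ∀ j : Fin 26,
    ∑ p, g (sg s (lft p)) * A p j + g (sg s (rgt j)) = 0 := by
  decide +kernel

theorem rows_ok : ∀ m ∈ rows, ∃ s : Fin 21,
    (∀ i : Fin 42, (⟨tb m i, tb m (i + 42)⟩ : K4) = g (sg s i)) ∨
    (∀ i : Fin 42, (⟨tb m i, tb m (i + 42)⟩ : K4) = om * g (sg s i)) := by
  decide +kernel

theorem uw_mem : ∀ p : Fin 16, uw (lft p) = ∑ j, A p j * uw (rgt j) := by
  decide +kernel

theorem uw_wt : (Finset.univ.filter fun i => uw i ≠ 0).card = 9 := by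
  decide +kernel

theorem cover_ok : cover = true := by decide +kernel
theorem leaf_0 : leaf rows 317247 = true := by decide +kernel
theorem leaf_1 : leaf rows 228779 = true := by decide +kernel
theorem leaf_2 : leaf rows 248695 = true := by decide +kernel
theorem leaf_3 : leaf rows 243069 = true := by decide +kernel
theorem leaf_4 : leaf rows 81787 = true := by decide +kernel
theorem leaf_5 : leaf rows 478895 = true := by decide +kernel
theorem leaf_6 : leaf rows 63451 = true := by decide +kernel
theorem leaf_7 : leaf rows 226015 = true := by decide +kernel
theorem leaf_8 : leaf rows 319445 = true := by decide +kernel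
theorem leaf_9 : leaf rows 240831 = true := by decide +kernel
theorem leaf_10 : leaf rows 260509 = true := by decide +kernel
theorem leaf_11 : leaf rows 171743 = true := by decide +kernel
theorem leaf_12 : leaf rows 179699 = true := by decide +kernel
theorem leaf_13 : leaf rows 372461 = true := by decide +kernel
theorem leaf_14 : leaf rows 387805 = true := by decide +kernel
theorem leaf_15 : leaf rows 380731 = true := by decide +kernel
theorem leaf_16 : leaf rows 189311 = true := by decide +kernel
theorem leaf_17 : leaf rows 367485 = true := by decide +kernel
theorem leaf_18 : leaf rows 159737 = true := by decide +kernel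
theorem leaf_19 : leaf rows 250869 = true := by decide +kernel
theorem leaf_20 : leaf rows 105951 = true := by decide +kernel
theorem leaf_21 : leaf rows 357877 = true := by decide +kernel
theorem leaf_22 : leaf rows 241487 = true := by decide +kernel
theorem leaf_23 : leaf rows 250363 = true := by decide +kernel
theorem leaf_24 : leaf rows 359371 = true := by decide +kernel
theorem leaf_25 : leaf rows 321247 = true := by decide +kernel
theorem leaf_26 : leaf rows 253651 = true := by decide +kernel

def wt (k : Fin 42 → K4) : ℕ := (Finset.univ.filter fun i => k i ≠ 0).card

def Q (k : Fin 42 → K4) : Prop := ∀ s : ℕ, ∑ i, g (sg s i) * k i = 0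

theorem sg_sg (a b : ℕ) (i : Fin 42) : sg a (sg b i) = sg (a + b) i := by
  apply Fin.ext; simp only [sg]; omega

theorem sg_mod (a : ℕ) (i : Fin 42) : sg (a % 21) i = sg a i := by
  apply Fin.ext; simp only [sg]; omega

theorem sg_mul (a : ℕ) (i : Fin 42) : sg (21 * a) i = i := by
  apply Fin.ext; simp only [sg]; omega

def sgE (r : ℕ) : Fin 42 ≃ Fin 42 where
  toFun := sg r
  invFun := sg (20 * r)
  left_inv i := by rw [sg_sg, show 20 * r + r = 21 * r by ring, sg_mul]
  right_inv i := by rw [sg_sg, show r + 20 * r = 21 * r by ring, sg_mul]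

theorem Q_shift (k : Fin 42 → K4) (h : Q k) (r : ℕ) : Q (fun i => k (sg r i)) := by
  intro s
  rw [← h (s + 20 * r)]
  refine Eq.trans ?_ (Equiv.sum_comp (sgE r) (fun i => g (sg (s + 20 * r) i) * k i))
  refine Finset.sum_congr rfl fun i _ => ?_
  change _ = g (sg (s + 20 * r) (sg r i)) * k (sg r i)
  have : sg s i = sg (s + 20 * r) (sg r i) := by
    rw [sg_sg, show s + 20 * r + r = s + 21 * r by ring, ← sg_sg, sg_mul]
  rw [this]

theorem wt_shift (k : Fin 42 → K4) (r : ℕ) : wt (fun i => k (sg r i)) = wt k := by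
  unfold wt
  refine Finset.card_bij (fun i _ => sg r i) ?_ ?_ ?_
  · intro i hi; simpa using hi
  · intro i _ j _ h; exact (sgE r).injective h
  · intro j hj
    refine ⟨(sgE r).symm j, ?_, (sgE r).apply_symm_apply j⟩
    have e : sg r ((sgE r).symm j) = j := (sgE r).apply_symm_apply j
    simpa [e] using hj

theorem Q_of_mem (k : Fin 42 → K4) (h : ∀ p, k (lft p) = ∑ j, A p j * k (rgt j)) : Q k := by
  intro s
  have hs := g_rows ⟨s % 21, Nat.mod_lt _ (by norm_num)⟩
  simp only [sg_mod] at hs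
  rw [sum42]
  simp only [h, Finset.mul_sum]
  rw [Finset.sum_comm, ← Finset.sum_add_distrib]
  refine Finset.sum_eq_zero fun j _ => ?_
  have := hs j
  rw [← zero_mul (k (rgt j)), ← this, add_mul, Finset.sum_mul]
  congr 1
  exact Finset.sum_congr rfl fun p _ => by ring

/-- bits of a word -/
def wd (k : Fin 42 → K4) (n : ℕ) : Bool :=
  if h : n < 42 then (k ⟨n, h⟩).a else if h : n - 42 < 42 then (k ⟨n - 42, h⟩).b else false

theorem wd_a (k : Fin 42 → K4) (i : Fin 42) : wd k i = (k i).a := by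
  simp [wd]

theorem wd_b (k : Fin 42 → K4) (i : Fin 42) : wd k (i + 42) = (k i).b := by
  simp [wd]

theorem sum_a (n : ℕ) (f : ℕ → K4) : (∑ i ∈ Finset.range n, f i).a = xs n (fun i => (f i).a) := by
  induction n with
  | zero => rfl
  | succ n ih => rw [Finset.sum_range_succ, K4.add_a, ih]; rfl

theorem xs_split (N n : ℕ) (hN : N = n + n) (f p q : ℕ → Bool) (hp : ∀ i, f i = p i)
    (hq : ∀ i, f (n + i) = q i) : xs N f = (xs n p ^^ xs n q) := by
  subst hN
  rw [xs_add, xs_congr n _ _ fun i _ => hp i, xs_congr n _ _ fun i _ => hq i]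

theorem par_wd (m : ℕ) (k : Fin 42 → K4) :
    par m (wd k) = (∑ i : Fin 42, (⟨tb m i, tb m (i + 42)⟩ : K4) * k i).a := by
  have e : ∑ i : Fin 42, (⟨tb m i, tb m (i + 42)⟩ : K4) * k i
      = ∑ i ∈ Finset.range 42, (⟨tb m i, tb m (i + 42)⟩ : K4) * ⟨wd k i, wd k (i + 42)⟩ := by
    rw [Finset.sum_range]
    refine Finset.sum_congr rfl fun i _ => ?_
    rw [wd_a, wd_b]
  rw [e, sum_a]
  simp only [K4.mul_a]
  rw [xs_xor]
  unfold par
  refine xs_split 84 42 (by norm_num) _ _ _ ?_ ?_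
  · intro i; rw [tb_eq]
  · intro i; rw [tb_eq, Nat.add_comm 42 i]

theorem par_rows (k : Fin 42 → K4) (h : Q k) : ∀ m ∈ rows, par m (wd k) = false := by
  intro m hm
  rw [par_wd]
  obtain ⟨s, hs | hs⟩ := rows_ok m hm
  · simp only [hs]
    rw [h s]; rfl
  · simp only [hs, mul_assoc]
    rw [← Finset.mul_sum, h s, mul_zero]; rfl

theorem countP_range (P : ℕ → Bool) (n : ℕ) :
    (List.range n).countP P = ((Finset.range n).filter fun i => P i = true).card := by
  induction n with
  | zero => rfl
  | succ n ih =>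
    rw [List.range_succ, List.countP_append, ih, Finset.range_add_one, Finset.filter_insert]
    by_cases hP : P n = true
    · simp [hP]
    · simp [hP]

theorem leaf_all : ∀ T ∈ Ts, leaf rows T = true := by
  intro T hT
  simp only [Ts, List.mem_cons, List.not_mem_nil, or_false] at hT
  rcases hT with rfl | rfl | rfl | rfl | rfl | rfl | rfl | rfl | rfl | rfl | rfl | rfl | rfl | rfl | rfl | rfl | rfl | rfl | rfl | rfl | rfl | rfl | rfl | rfl | rfl | rfl | rfl
  · exact leaf_0
  · exact leaf_1
  · exact leaf_2
  · exact leaf_3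
  · exact leaf_4
  · exact leaf_5
  · exact leaf_6
  · exact leaf_7
  · exact leaf_8
  · exact leaf_9
  · exact leaf_10
  · exact leaf_11
  · exact leaf_12
  · exact leaf_13
  · exact leaf_14
  · exact leaf_15
  · exact leaf_16
  · exact leaf_17
  · exact leaf_18
  · exact leaf_19
  · exact leaf_20
  · exact leaf_21
  · exact leaf_22
  · exact leaf_23
  · exact leaf_24
  · exact leaf_25
  · exact leaf_26

theorem wt_leaf (k : Fin 42 → K4) (h : Q k) (hk : ∃ i, k i ≠ 0) (T : ℕ) (hT : T ∈ Ts)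
    (hz : ∀ i : Fin 42, tb T ((i : ℕ) % 21) = false → k i = 0) : 9 ≤ wt k := by
  have h9 := leaf_sound (wd k) rows T (leaf_all T hT) (par_rows k h) (by
    intro i hi hT
    have hT : tb T (i % 21) = false := hT
    by_cases h42 : i < 42
    · have := wd_a k ⟨i, h42⟩
      rw [hz ⟨i, h42⟩ hT] at this
      exact this
    · have := wd_b k ⟨i - 42, by omega⟩
      rw [hz ⟨i - 42, by omega⟩ (by
        rw [show ((⟨i - 42, by omega⟩ : Fin 42) : ℕ) % 21 = i % 21 by simp only []; omega]
        exact hT)] at this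
      simp only [show i - 42 + 42 = i by omega] at this
      exact this) (by
    obtain ⟨i, hi⟩ := hk
    rw [K4.ne_zero_iff, Bool.or_eq_true] at hi
    rcases hi with hi | hi
    · exact ⟨i, by omega, by rw [wd_a, hi]⟩
    · exact ⟨i + 42, by omega, by rw [wd_b, hi]⟩)
  refine h9.trans ?_
  rw [countP_range]
  unfold wt
  refine Finset.card_le_card_of_surjOn (fun i : Fin 42 => (i : ℕ)) ?_
  intro n hn
  simp only [Finset.coe_filter, Finset.mem_range, Set.mem_setOf_eq] at hn
  obtain ⟨hn1, hn2⟩ := hn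
  refine ⟨⟨n, hn1⟩, ?_, rfl⟩
  have h1 := wd_a k ⟨n, hn1⟩
  have h2 := wd_b k ⟨n, hn1⟩
  simp only at h1 h2
  rw [h1, h2] at hn2
  simp only [Finset.coe_filter, Finset.mem_univ, true_and, Set.mem_setOf_eq]
  exact (K4.ne_zero_iff _).2 hn2

/-- column `i` is hit -/
def hit (k : Fin 42 → K4) (n : ℕ) : Bool :=
  decide (∃ i : Fin 42, (i : ℕ) % 21 = n ∧ k i ≠ 0)

theorem wt_ge (k : Fin 42 → K4) (h : Q k) (hk : ∃ i, k i ≠ 0) : 9 ≤ wt k := by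
  by_contra hlt
  push Not at hlt
  obtain ⟨i0, hi0⟩ := hk
  set r : ℕ := (i0 : ℕ) % 21 with hr
  set k1 : Fin 42 → K4 := fun i => k (sg r i) with hk1
  have hQ1 : Q k1 := Q_shift k h r
  have hw1 : wt k1 = wt k := wt_shift k r
  have h0 : ∃ i : Fin 42, (i : ℕ) % 21 = 0 ∧ k1 i ≠ 0 := by
    refine ⟨⟨(i0 : ℕ) / 21 * 21, by omega⟩, by simp, ?_⟩
    have : sg r ⟨(i0 : ℕ) / 21 * 21, by omega⟩ = i0 := by
      apply Fin.ext; simp only [sg]; omega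
    rw [hk1]; simpa only [this] using hi0
  obtain ⟨t, ht, htb⟩ := exists_bits 20 (fun i => hit k1 (i + 1))
  have hcount : (List.range 20).countP (fun i => t.testBit i) < 8 := by
    rw [countP_range]
    have hsub : insert 0 (((Finset.range 20).filter fun i => t.testBit i = true).image (· + 1))
        ⊆ (Finset.univ.filter fun i => k1 i ≠ 0).image (fun i : Fin 42 => (i : ℕ) % 21) := by
      intro n hn
      rw [Finset.mem_insert, Finset.mem_image] at hn
      rw [Finset.mem_image]
      rcases hn with rfl | ⟨i, hi, rfl⟩
      · obtain ⟨i, h1, h2⟩ := h0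
        exact ⟨i, by simpa using h2, h1⟩
      · rw [Finset.mem_filter, Finset.mem_range] at hi
        have := hi.2
        rw [htb i hi.1] at this
        obtain ⟨j, h1, h2⟩ := of_decide_eq_true this
        exact ⟨j, by simpa using h2, h1⟩
    have h1 := (Finset.card_le_card hsub).trans Finset.card_image_le
    rw [Finset.card_insert_of_notMem (by simp),
      Finset.card_image_of_injective _ (add_left_injective 1)] at h1
    have h2 : (Finset.univ.filter fun i => k1 i ≠ 0).card = wt k1 := rfl
    omega
  obtain ⟨T, hT, s, hs, hTs, hcov⟩ := cover_sound cover_ok t ht hcount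
  have h2 := wt_leaf (fun i => k1 (sg (21 - s) i)) (Q_shift k1 hQ1 _) (by
    obtain ⟨i, -, hi⟩ := h0
    refine ⟨sg s i, ?_⟩
    have : sg (21 - s) (sg s i) = i := by
      rw [sg_sg, show 21 - s + s = 21 * 1 by omega, sg_mul]
    simpa only [this] using hi) T hT (by
    intro i hi
    by_contra hne
    have hm : ((sg (21 - s) i : Fin 42) : ℕ) % 21 = ((i : ℕ) + (21 - s)) % 21 := by
      simp only [sg]; omega
    set n := ((sg (21 - s) i : Fin 42) : ℕ) % 21 with hn
    have hn21 : n < 21 := Nat.mod_lt _ (by norm_num)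
    rcases Nat.eq_zero_or_pos n with h0 | hpos
    · have : (i : ℕ) % 21 = s := by omega
      rw [this, hTs] at hi; cases hi
    · have h3 := hcov (n - 1) (by omega) (by
        rw [show (n - 1 + 1 + s) % 21 = (i : ℕ) % 21 by omega]; exact hi)
      rw [htb (n - 1) (by omega)] at h3
      have h4 := of_decide_eq_false h3
      exact h4 ⟨sg (21 - s) i, by omega, hne⟩)
  rw [wt_shift] at h2
  omega

end QC42

open QC42 in
theorem QC42.main (φ : K4 ≃+* F4) :
    ∃ Ccode : Submodule F4 (Fin 42 → F4),
      Module.finrank F4 ↥Ccode = 26 ∧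
      (∀ u ∈ Ccode, u ≠ 0 → 9 ≤ hammingWt u) ∧
      (∃ u ∈ Ccode, u ≠ 0 ∧ hammingWt u = 9) ∧
      hermDual Ccode ≤ Ccode := by
  let Cc : Submodule F4 (Fin 42 → F4) :=
    { carrier := {v | ∀ p, v (lft p) = ∑ j, φ (A p j) * v (rgt j)}
      zero_mem' := by intro p; simp
      add_mem' := by
        intro v w hv hw p
        simp only [Pi.add_apply, mul_add, Finset.sum_add_distrib]
        rw [hv p, hw p]
      smul_mem' := by
        intro c v hv p
        simp only [Pi.smul_apply, smul_eq_mul]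
        rw [hv p, Finset.mul_sum]
        exact Finset.sum_congr rfl fun j _ => by ring }
  have hmem : ∀ v, v ∈ Cc ↔ ∀ p, v (lft p) = ∑ j, φ (A p j) * v (rgt j) := fun v => Iff.rfl
  have hcases : ∀ i : Fin 42, (∃ p, i = lft p) ∨ (∃ j, i = rgt j) := by
    intro i
    by_cases h : (i : ℕ) < 16
    · exact Or.inl ⟨⟨i, h⟩, rfl⟩
    · refine Or.inr ⟨⟨(i : ℕ) - 16, by omega⟩, Fin.ext ?_⟩
      simp only [rgt]; omega
  let enc : (Fin 26 → F4) → Fin 42 → F4 := fun u i =>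
    if h : (i : ℕ) < 16 then ∑ j, φ (A ⟨i, h⟩ j) * u j else u ⟨(i : ℕ) - 16, by omega⟩
  have enc_l : ∀ u p, enc u (lft p) = ∑ j, φ (A p j) * u j := by
    intro u p; simp [enc, lft]
  have enc_r : ∀ u j, enc u (rgt j) = u j := by
    intro u j; simp [enc, rgt]
  have enc_mem : ∀ u, enc u ∈ Cc := by
    intro u; rw [hmem]; intro p
    rw [enc_l]
    exact Finset.sum_congr rfl fun j _ => by rw [enc_r]
  have hwt : ∀ u : Fin 42 → F4, hammingWt u = wt (fun i => φ.symm (u i)) := by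
    intro u
    classical
    unfold hammingWt wt
    rw [Nat.card_eq_fintype_card, Fintype.card_subtype]
    congr 1
    ext i
    simp
  refine ⟨Cc, ?_, ?_, ?_, ?_⟩
  · let pr : ↥Cc →ₗ[F4] (Fin 26 → F4) := (LinearMap.funLeft F4 F4 rgt).domRestrict Cc
    have hpr : ∀ (v : ↥Cc) j, pr v j = v.1 (rgt j) := fun v j => rfl
    have hb : Function.Bijective pr := by
      constructor
      · intro v w h
        apply Subtype.ext
        have hr : ∀ j, v.1 (rgt j) = w.1 (rgt j) := fun j => by
          rw [← hpr, ← hpr, h]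
        funext i
        rcases hcases i with ⟨p, rfl⟩ | ⟨j, rfl⟩
        · rw [(hmem _).1 v.2 p, (hmem _).1 w.2 p]
          exact Finset.sum_congr rfl fun j _ => by rw [hr]
        · exact hr j
      · intro u
        exact ⟨⟨enc u, enc_mem u⟩, funext fun j => by rw [hpr]; exact enc_r u j⟩
    rw [(LinearEquiv.ofBijective pr hb).finrank_eq, Module.finrank_fin_fun]
  · intro u hu hne
    rw [hwt]
    apply wt_ge
    · apply Q_of_mem
      intro p
      rw [(hmem u).1 hu p, map_sum]
      simp
    · by_contra hcon
      push Not at hcon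
      apply hne
      funext i
      simpa using hcon i
  · have hw9 : hammingWt (fun i => φ (uw i)) = 9 := by
      rw [hwt]
      simp only [RingEquiv.symm_apply_apply]
      exact uw_wt
    refine ⟨fun i => φ (uw i), ?_, ?_, hw9⟩
    · rw [hmem]; intro p
      rw [uw_mem p, map_sum]
      simp
    · intro h0
      rw [h0] at hw9
      simp [hammingWt] at hw9
  · intro v hv
    have hv : ∀ u ∈ Cc, hermInner u v = 0 := hv
    have h7 : (2 : F4) = 0 := CharTwo.two_eq_zero
    have key : ∀ j, v (rgt j) = ∑ p, φ (A p j * A p j) * v (lft p) := by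
      intro j
      have h1 := hv _ (enc_mem (Pi.single j 1))
      unfold hermInner at h1
      rw [sum42] at h1
      simp only [enc_l, enc_r] at h1
      have e1 : ∀ p, ∑ i, φ (A p i) * (Pi.single j 1 : Fin 26 → F4) i = φ (A p j) := by
        intro p
        rw [Finset.sum_eq_single j]
        · simp
        · intro b _ hb; simp [hb]
        · simp
      have e2 : ∑ i, (Pi.single j 1 : Fin 26 → F4) i * v (rgt i) ^ 2 = v (rgt j) ^ 2 := by
        rw [Finset.sum_eq_single j]
        · simp
        · intro b _ hb; simp [hb]
        · simp
      simp only [e1] at h1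
      rw [e2] at h1
      have hA4 : ∀ x : K4, x * x * (x * x) = x := by
        rintro ⟨_ | _, _ | _⟩ <;> rfl
      have h2 : (∑ p, φ (A p j * A p j) * v (lft p)) ^ 2 = ∑ p, φ (A p j) * v (lft p) ^ 2 := by
        rw [sum_pow_char 2]
        refine Finset.sum_congr rfl fun p _ => ?_
        rw [mul_pow, ← map_pow, pow_two (A p j * A p j), hA4]
      have h3 : (v (rgt j) - ∑ p, φ (A p j * A p j) * v (lft p)) ^ 2 = 0 := by
        rw [← h2] at h1
        linear_combination h1 - (∑ p, φ (A p j * A p j) * v (lft p)) * v (rgt j) * h7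
      exact sub_eq_zero.1 (pow_eq_zero_iff (by norm_num) |>.1 h3)
    rw [hmem]
    intro p
    simp only [key, Finset.mul_sum]
    rw [Finset.sum_comm]
    have e3 : ∀ q, ∑ j, φ (A p j) * (φ (A q j * A q j) * v (lft q))
        = (if p = q then 1 else 0) * v (lft q) := by
      intro q
      have := congrArg φ (A_unitary p q)
      rw [map_sum] at this
      have h1 : φ (if p = q then 1 else 0) = if p = q then 1 else 0 := by
        split_ifs <;> simp
      rw [← h1, ← this, Finset.sum_mul]
      exact Finset.sum_congr rfl fun j _ => by rw [map_mul φ (A p j)]; ring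
    simp only [e3]
    simp

/-- There exists a Hermitian dual-containing `[42, 26, 9]₄` code. -/
theorem exists_dual_containing_42_26_9 :
    ∃ Ccode : Submodule F4 (Fin 42 → F4),
      Module.finrank F4 ↥Ccode = 26 ∧
      (∀ u ∈ Ccode, u ≠ 0 → 9 ≤ hammingWt u) ∧
      (∃ u ∈ Ccode, u ≠ 0 ∧ hammingWt u = 9) ∧
      hermDual Ccode ≤ Ccode := by
  obtain ⟨φ⟩ := QC42.exists_equiv
  exact QC42.main φ

end
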